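/- arXiv:2403.07348 — 7 statements merged into one kernel-verified Lean document; each statement's English description precedes it below -/
import Mathlib

section
/- Let z and y be unit quaternions. The ℝ-linear isometry [z,y] of ℍ given by x ↦ z̄ x y has no invariant 1-dimensional ℝ-subspace if and only if z is not conjugate in the group of nonzero quaternions to y or to −y; that is, [z,y] has an invariant 1-dimensional subspace if and only if there exists a nonzero quaternion x with z = x y x⁻¹ or z = −x y x⁻¹. -/
open Quaternion

noncomputable section

/-- For quaternions `z, w`, the ℝ-linear map `[z,w] : x ↦ z̄ x w` on `ℍ`. -/
def qrot (z w : ℍ[ℝ]) : ℍ[ℝ] →ₗ[ℝ] ℍ[ℝ] :=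
  (LinearMap.mulRight ℝ w).comp (LinearMap.mulLeft ℝ (star z))

/-- If `z` and `y` are unit quaternions, then the isometry `[z,y] : x ↦ z̄ x y` of `ℍ` has
no invariant 1-dimensional ℝ-subspace if and only if `z` is not conjugate in `ℍˣ` to `y` or
to `-y`; equivalently, `[z,y]` has an invariant 1-dimensional subspace iff there is a nonzero
quaternion `x` with `z = x y x⁻¹` or `z = -(x y x⁻¹)`. -/
theorem stmt_0 (z y : ℍ[ℝ]) (hz : ‖z‖ = 1) (hy : ‖y‖ = 1) :
    ((¬ ∃ L : Submodule ℝ ℍ[ℝ], Module.finrank ℝ L = 1 ∧ L.map (qrot z y) = L) ↔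
      ¬ ∃ x : ℍ[ℝ], x ≠ 0 ∧ (z = x * y * x⁻¹ ∨ z = -(x * y * x⁻¹))) ∧
    ((∃ L : Submodule ℝ ℍ[ℝ], Module.finrank ℝ L = 1 ∧ L.map (qrot z y) = L) ↔
      ∃ x : ℍ[ℝ], x ≠ 0 ∧ (z = x * y * x⁻¹ ∨ z = -(x * y * x⁻¹))) := by
  have hzz : star z * z = 1 := by
    rw [Quaternion.star_mul_self, Quaternion.normSq_eq_norm_mul_self, hz]; simp
  have hzz' : z * star z = 1 := by
    rw [Quaternion.self_mul_star, Quaternion.normSq_eq_norm_mul_self, hz]; simp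
  have key : (∃ L : Submodule ℝ ℍ[ℝ], Module.finrank ℝ L = 1 ∧ L.map (qrot z y) = L) ↔
      ∃ x : ℍ[ℝ], x ≠ 0 ∧ (z = x * y * x⁻¹ ∨ z = -(x * y * x⁻¹)) := by
    have hq : ∀ x, qrot z y x = star z * x * y := fun x => by simp [qrot]
    constructor
    · rintro ⟨L, hL, hm⟩
      obtain ⟨v, hv0, hv⟩ := finrank_eq_one_iff'.1 hL
      have hx0 : (v : ℍ[ℝ]) ≠ 0 := by simpa using hv0
      have hmem : qrot z y v ∈ L := by
        exact hm.le (Submodule.mem_map_of_mem v.2)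
      obtain ⟨c, hc⟩ := hv ⟨_, hmem⟩
      have hc' : c • (v : ℍ[ℝ]) = star z * v * y := by
        rw [← hq]; exact congrArg Subtype.val hc
      generalize (v : ℍ[ℝ]) = x at hx0 hc'
      have hn : |c| = 1 := by
        have h := congrArg norm hc'
        rw [norm_smul, norm_mul, norm_mul, Quaternion.norm_star, hz, hy, one_mul, mul_one] at h
        exact (mul_eq_right₀ (norm_ne_zero_iff.2 hx0)).1 h
      have hxy : x * y = z * (c • x) := by
        rw [hc', ← mul_assoc, ← mul_assoc, hzz', one_mul]
      refine ⟨x, hx0, ?_⟩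
      rw [hxy]
      rcases eq_or_eq_neg_of_abs_eq hn with h | h
      · left; rw [h, one_smul, mul_inv_cancel_right₀ hx0]
      · right; rw [h, neg_smul, one_smul, mul_neg, neg_mul, neg_neg, mul_inv_cancel_right₀ hx0]
    · rintro ⟨x, hx, h⟩
      refine ⟨Submodule.span ℝ {x}, finrank_span_singleton hx, ?_⟩
      rw [Submodule.map_span, Set.image_singleton, hq]
      rcases h with h | h
      · have h1 : z * x = x * y := by
          conv_lhs => rw [h]
          rw [inv_mul_cancel_right₀ hx]
        rw [mul_assoc, ← h1, ← mul_assoc, hzz, one_mul]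
      · have h1 : -(z * x) = x * y := by
          conv_lhs => rw [h]
          rw [neg_mul, neg_neg, inv_mul_cancel_right₀ hx]
        rw [mul_assoc, ← h1, mul_neg, ← mul_assoc, hzz, one_mul, ← Set.neg_singleton, Submodule.span_neg]
  exact ⟨not_congr key, key⟩
end
end

section
/- For unit quaternions z₁, w₁, z₂, w₂, the maps x ↦ z̄₁ x w₁ and x ↦ z̄₂ x w₂ on ℍ are equal if and only if (z₁, w₁) = (z₂, w₂) or (z₁, w₁) = (−z₂, −w₂). -/
open Quaternion

lemma aux_unit (z : ℍ[ℝ]) (h : ‖z‖ = 1) : z * star z = 1 ∧ star z * z = 1 := by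
  have : Quaternion.normSq z = 1 := by
    rw [Quaternion.normSq_eq_norm_mul_self, h]; norm_num
  rw [Quaternion.self_mul_star, Quaternion.star_mul_self, this]
  simp

lemma aux_central (a : ℍ[ℝ]) (hn : ‖a‖ = 1) (h : ∀ x : ℍ[ℝ], a * x = x * a) :
    a = 1 ∨ a = -1 := by
  let u : ℍ[ℝ] := ⟨0, 1, 0, 0⟩
  let v : ℍ[ℝ] := ⟨0, 0, 1, 0⟩
  have e1 : (a * u).imJ = (u * a).imJ := by rw [h]
  have e2 : (a * u).imK = (u * a).imK := by rw [h]
  have e3 : (a * v).imK = (v * a).imK := by rw [h]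
  rw [Quaternion.imJ_mul, Quaternion.imJ_mul] at e1
  rw [Quaternion.imK_mul, Quaternion.imK_mul] at e2 e3
  simp only [u, v] at e1 e2 e3
  have hi : a.imI = 0 := by linarith
  have hj : a.imJ = 0 := by linarith
  have hk : a.imK = 0 := by linarith
  have hs : Quaternion.normSq a = 1 := by
    rw [Quaternion.normSq_eq_norm_mul_self, hn]; norm_num
  rw [Quaternion.normSq_def', hi, hj, hk] at hs
  have : a.re = 1 ∨ a.re = -1 := by
    apply sq_eq_sq_iff_eq_or_eq_neg.mp; linarith
  rcases this with h | h
  · left; ext <;> simp [*]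
  · right; ext <;> simp [*]

/-- For unit quaternions `z₁, w₁, z₂, w₂`, the maps `x ↦ z̄₁ x w₁` and `x ↦ z̄₂ x w₂` on `ℍ`
are equal if and only if `(z₁, w₁) = (z₂, w₂)` or `(z₁, w₁) = (−z₂, −w₂)`. -/
theorem stmt_2 (z₁ w₁ z₂ w₂ : ℍ[ℝ]) (hz₁ : ‖z₁‖ = 1) (hw₁ : ‖w₁‖ = 1)
    (hz₂ : ‖z₂‖ = 1) (hw₂ : ‖w₂‖ = 1) :
    (∀ x : ℍ[ℝ], star z₁ * x * w₁ = star z₂ * x * w₂) ↔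
      ((z₁, w₁) = (z₂, w₂) ∨ (z₁, w₁) = (-z₂, -w₂)) := by
  constructor
  · intro h
    have key : ∀ x : ℍ[ℝ], (z₂ * star z₁) * x = x * (w₂ * star w₁) := by
      intro x
      calc (z₂ * star z₁) * x = z₂ * (star z₁ * x * w₁) * star w₁ := by
            simp only [mul_assoc, (aux_unit w₁ hw₁).1, mul_one]
        _ = (z₂ * star z₂) * x * (w₂ * star w₁) := by rw [h]; simp only [mul_assoc]
        _ = _ := by rw [(aux_unit z₂ hz₂).1, one_mul]
    have hab : z₂ * star z₁ = w₂ * star w₁ := by simpa using key 1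
    have hz : z₂ = (z₂ * star z₁) * z₁ := by rw [mul_assoc, (aux_unit z₁ hz₁).2, mul_one]
    have hw : w₂ = (z₂ * star z₁) * w₁ := by
      rw [hab, mul_assoc, (aux_unit w₁ hw₁).2, mul_one]
    rcases aux_central (z₂ * star z₁) (by rw [norm_mul, norm_star, hz₁, hz₂, one_mul])
      (fun x => by rw [key x, hab]) with e | e
    · left; rw [e, one_mul] at hz hw; rw [hz, hw]
    · right; rw [e, neg_one_mul] at hz hw; rw [hz, hw, neg_neg, neg_neg]
  · rintro (h | h) x <;> obtain ⟨rfl, rfl⟩ := Prod.mk.inj h <;> simp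
end

section
/- Let m and n be integers with m ≥ 3 and n ≥ 3. Set z = exp(π(1/n + 1/m)·i) = cos(π(1/n+1/m)) + sin(π(1/n+1/m))·i and w = exp(π(1/n − 1/m)·i) = cos(π(1/n−1/m)) + sin(π(1/n−1/m))·i, unit quaternions. Then the ℝ-linear isometry [z,w] of ℍ given by x ↦ z̄ x w has no invariant 1-dimensional ℝ-subspace (equivalently, no real eigenvector). -/
open Quaternion

noncomputable section

theorem aux_comp (z w v : ℍ[ℝ]) (c p q r s : ℝ) (z1 : z.re = p) (z2 : z.imI = q)
    (z3 : z.imJ = 0) (z4 : z.imK = 0) (w1 : w.re = r) (w2 : w.imI = s)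
    (w3 : w.imJ = 0) (w4 : w.imK = 0) (hc : c • v = qrot z w v) :
    c * v.re = (p * r + q * s) * v.re + (q * r - p * s) * v.imI ∧
    c * v.imI = (p * r + q * s) * v.imI - (q * r - p * s) * v.re ∧
    c * v.imJ = (p * r - q * s) * v.imJ + (q * r + p * s) * v.imK ∧
    c * v.imK = (p * r - q * s) * v.imK - (q * r + p * s) * v.imJ := by
  have hc : c • v = star z * v * w := hc
  have h1 := congrArg QuaternionAlgebra.re hc
  have h2 := congrArg QuaternionAlgebra.imI hc
  have h3 := congrArg QuaternionAlgebra.imJ hc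
  have h4 := congrArg QuaternionAlgebra.imK hc
  simp [z1, z2, z3, z4, w1, w2, w3, w4] at h1 h2 h3 h4
  refine ⟨?_, ?_, ?_, ?_⟩
  · linear_combination h1
  · linear_combination h2
  · linear_combination h3
  · linear_combination h4

theorem aux_rot (S C c a b : ℝ) (hS : S ≠ 0) (h1 : C * a - S * b = c * a)
    (h2 : S * a + C * b = c * b) : a = 0 ∧ b = 0 := by
  have h : S * (a ^ 2 + b ^ 2) = 0 := by linear_combination a * h2 - b * h1
  have h' : a ^ 2 + b ^ 2 = 0 := by
    rcases mul_eq_zero.mp h with h | h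
    · exact absurd h hS
    · exact h
  constructor <;> nlinarith [sq_nonneg a, sq_nonneg b]

theorem aux_sin (m : ℤ) (hm : 3 ≤ m) : Real.sin (2 * (Real.pi * (1 / (m : ℝ)))) ≠ 0 := by
  have hm' : (3 : ℝ) ≤ m := by exact_mod_cast hm
  have hp := Real.pi_pos
  have h3 : 1 / (m : ℝ) ≤ 1 / 3 := one_div_le_one_div_of_le (by norm_num) hm'
  have h0 : 0 < 1 / (m : ℝ) := by positivity
  apply ne_of_gt
  apply Real.sin_pos_of_pos_of_lt_pi
  · positivity
  · nlinarith

/-- For integers `m, n ≥ 3`, with `z = exp(π(1/n + 1/m)·i)` and `w = exp(π(1/n − 1/m)·i)`,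
the isometry `[z,w] : x ↦ z̄ x w` of `ℍ` has no invariant 1-dimensional ℝ-subspace. -/
theorem stmt_3 (m n : ℤ) (hm : 3 ≤ m) (hn : 3 ≤ n) :
    ¬ ∃ L : Submodule ℝ ℍ[ℝ], Module.finrank ℝ L = 1 ∧
      L.map (qrot
        ⟨Real.cos (Real.pi * (1 / (n : ℝ) + 1 / (m : ℝ))),
          Real.sin (Real.pi * (1 / (n : ℝ) + 1 / (m : ℝ))), 0, 0⟩
        ⟨Real.cos (Real.pi * (1 / (n : ℝ) - 1 / (m : ℝ))),
          Real.sin (Real.pi * (1 / (n : ℝ) - 1 / (m : ℝ))), 0, 0⟩) = L := by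
  rintro ⟨L, hL, hmap⟩
  obtain ⟨⟨v, hvL⟩, hv0, hv⟩ := finrank_eq_one_iff'.mp hL
  have hmem := hmap.le (Submodule.mem_map_of_mem hvL)
  obtain ⟨c, hc⟩ := hv ⟨_, hmem⟩
  have hc := congrArg Subtype.val hc
  have hsm := aux_sin m hm
  have hsn := aux_sin n hn
  have em : 2 * (Real.pi * (1 / (m : ℝ))) = Real.pi * (1 / (n : ℝ) + 1 / (m : ℝ))
    - Real.pi * (1 / (n : ℝ) - 1 / (m : ℝ)) := by ring
  have en : 2 * (Real.pi * (1 / (n : ℝ))) = Real.pi * (1 / (n : ℝ) + 1 / (m : ℝ))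
    + Real.pi * (1 / (n : ℝ) - 1 / (m : ℝ)) := by ring
  rw [em, Real.sin_sub] at hsm
  rw [en, Real.sin_add] at hsn
  generalize Real.pi * (1 / (n : ℝ) + 1 / (m : ℝ)) = α at *
  generalize Real.pi * (1 / (n : ℝ) - 1 / (m : ℝ)) = β at *
  obtain ⟨h1, h2, h3, h4⟩ := aux_comp _ _ v c (Real.cos α) (Real.sin α) (Real.cos β) (Real.sin β)
    rfl rfl rfl rfl rfl rfl rfl rfl hc
  obtain ⟨ha, hb⟩ := aux_rot _ (Real.cos α * Real.cos β + Real.sin α * Real.sin β) c v.imI v.re hsm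
    (by linear_combination -h2) (by linear_combination -h1)
  obtain ⟨hd, he⟩ := aux_rot _ (Real.cos α * Real.cos β - Real.sin α * Real.sin β) c v.imK v.imJ hsn
    (by linear_combination -h4) (by linear_combination -h3)
  apply hv0
  apply Subtype.ext
  apply Quaternion.ext <;> simp [*]
end
end

section
/- Let n be a positive integer and let G be a finite subgroup of the orthogonal group O(n) acting on ℝⁿ. Then the following are equivalent: (1) there exists w ∈ O(n) with determinant −1 commuting with every element of G (i.e., the centralizer of G in O(n) is not contained in SO(n)); (2) there exists a G-invariant ℝ-subspace of ℝⁿ of odd dimension (a subspace V with g(V) = V for all g ∈ G and dim V odd). -/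
open Polynomial

lemma aux_pos (q : ℝ[X]) (hq : q.Monic) (h : ∀ t : ℝ, 0 ≤ t → q.eval t ≠ 0) : 0 < q.eval 0 := by
  by_cases hd : 0 < q.degree
  · have ht := q.tendsto_atTop_of_leadingCoeff_nonneg hd (by rw [hq.leadingCoeff]; norm_num)
    obtain ⟨T, hT0, hT⟩ := ((Filter.eventually_ge_atTop (0:ℝ)).and (ht.eventually_gt_atTop 0)).exists
    by_contra hc
    push Not at hc
    obtain ⟨t, ht, ht'⟩ := intermediate_value_Icc hT0 (f := fun x => q.eval x)
      q.continuous.continuousOn ⟨hc, hT.le⟩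
    exact h t ht.1 ht'
  · have : q = 1 := by
      apply eq_one_of_monic_natDegree_zero hq
      exact natDegree_eq_zero_iff_degree_le_zero.mpr (not_lt.mp hd)
    simp [this]

lemma aux_odd {n : ℕ} (w : Matrix (Fin n) (Fin n) ℝ) (hw : w ∈ Matrix.orthogonalGroup (Fin n) ℝ)
    (hdet : w.det = -1) :
    Odd (Module.finrank ℝ (Module.End.maxGenEigenspace (Matrix.mulVecLin (-w)) 1)) := by
  rw [LinearMap.finrank_maxGenEigenspace_eq]
  set f := Matrix.mulVecLin (-w) with hf
  have hmon : f.charpoly.Monic := f.charpoly_monic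
  obtain ⟨q, hq, hnd⟩ := exists_eq_pow_rootMultiplicity_mul_and_not_dvd f.charpoly hmon.ne_zero 1
  set m := f.charpoly.rootMultiplicity 1
  have hX : ((X - C (1:ℝ)) ^ m).Monic := (monic_X_sub_C 1).pow m
  have hqm : q.Monic := by
    rw [hq] at hmon
    exact hX.of_mul_monic_left hmon
  have hroot : ∀ t : ℝ, 0 ≤ t → q.eval t ≠ 0 := by
    intro t ht h0
    by_cases h1 : t = 1
    · subst h1
      exact hnd (dvd_iff_isRoot.mpr h0)
    · have hr : f.charpoly.IsRoot t := by
        rw [IsRoot, hq, eval_mul, h0, mul_zero]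
      rw [← Module.End.hasEigenvalue_iff_isRoot_charpoly] at hr
      obtain ⟨v, hv⟩ := hr.exists_hasEigenvector
      have hv1 := hv.apply_eq_smul
      have hv2 := hv.2
      have hfv : (-w).mulVec v = t • v := hv1
      have hww : w.transpose * w = 1 := (Matrix.mem_orthogonalGroup_iff' _ _).mp hw
      have hd : (-w).mulVec v ⬝ᵥ (-w).mulVec v = v ⬝ᵥ v := by
        rw [Matrix.dotProduct_mulVec, Matrix.vecMul_mulVec]
        simp [hww]
      rw [hfv] at hd
      have hvv : v ⬝ᵥ v ≠ 0 := by simpa using hv2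
      simp only [smul_dotProduct, dotProduct_smul, smul_eq_mul] at hd
      have : (t * t - 1) * (v ⬝ᵥ v) = 0 := by linarith
      rcases mul_eq_zero.mp this with h | h
      · apply h1; nlinarith
      · exact hvv h
  have hpos := aux_pos q hqm hroot
  have he : f.charpoly.eval 0 = -1 := by
    have := Matrix.toLin'_apply' (-w)
    have hc : f.charpoly = (-w).charpoly := by
      rw [hf, ← Matrix.toLin'_apply', Matrix.charpoly_toLin']
    rw [hc, Matrix.eval_charpoly]
    simpa using hdet
  rw [hq] at he
  by_contra hne
  rw [Nat.not_odd_iff_even] at hne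
  simp [hne.neg_one_pow] at he
  linarith

lemma aux_map {n : ℕ} (V : Submodule ℝ (Fin n → ℝ)) (G : Subgroup (Matrix.orthogonalGroup (Fin n) ℝ))
    (h : ∀ g ∈ G, ∀ v ∈ V, (g : Matrix (Fin n) (Fin n) ℝ).mulVec v ∈ V) :
    ∀ g ∈ G, V.map (Matrix.mulVecLin (g : Matrix (Fin n) (Fin n) ℝ)) = V := by
  intro g hg
  apply le_antisymm
  · rintro _ ⟨v, hv, rfl⟩
    exact h g hg v hv
  · intro v hv
    refine ⟨_, h g⁻¹ (G.inv_mem hg) v hv, ?_⟩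
    have : (g : Matrix (Fin n) (Fin n) ℝ) * ((g⁻¹ : Matrix.orthogonalGroup (Fin n) ℝ) : Matrix (Fin n) (Fin n) ℝ) = 1 := by
      rw [← Submonoid.coe_mul, mul_inv_cancel]; rfl
    simp [Matrix.mulVec_mulVec]

lemma aux_refl {n : ℕ} (V : Submodule ℝ (Fin n → ℝ)) (hV : Odd (Module.finrank ℝ V)) :
    ∃ w : Matrix.orthogonalGroup (Fin n) ℝ, (w : Matrix (Fin n) (Fin n) ℝ).det = -1 ∧
      ∀ g : Matrix.orthogonalGroup (Fin n) ℝ,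
        V.map (Matrix.mulVecLin (g : Matrix (Fin n) (Fin n) ℝ)) = V → w * g = g * w := by
  let φ : Matrix.orthogonalGroup (Fin n) ℝ ≃*
      (EuclideanSpace ℝ (Fin n) ≃ₗᵢ[ℝ] EuclideanSpace ℝ (Fin n)) :=
    (Unitary.mapEquiv ⟨(Matrix.toEuclideanCLM (n := Fin n) (𝕜 := ℝ)).toRingEquiv.toMulEquiv, fun a => map_star (Matrix.toEuclideanCLM (n := Fin n) (𝕜 := ℝ)) a⟩).toMulEquiv.trans
      Unitary.linearIsometryEquiv
  have hφ : ∀ g x, φ g x = WithLp.toLp 2 ((g : Matrix (Fin n) (Fin n) ℝ).mulVec (WithLp.ofLp x)) :=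
    fun g x => rfl
  let e := (WithLp.linearEquiv 2 ℝ (Fin n → ℝ)).symm
  let K : Submodule ℝ (EuclideanSpace ℝ (Fin n)) := V.map (e : (Fin n → ℝ) →ₗ[ℝ] _)
  have hK : Module.finrank ℝ K = Module.finrank ℝ V := LinearEquiv.finrank_map_eq e V
  refine ⟨φ.symm Kᗮ.reflection, ?_, ?_⟩
  · have h1 := Kᗮ.det_reflection
    rw [Submodule.orthogonal_orthogonal, hK, hV.neg_one_pow] at h1
    rw [← h1]
    obtain ⟨w, hw⟩ := φ.surjective Kᗮ.reflection
    rw [← hw, φ.symm_apply_apply]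
    have : ((φ w).toLinearMap) = Matrix.toEuclideanLin (w : Matrix (Fin n) (Fin n) ℝ) := rfl
    change _ = LinearMap.det (Matrix.toEuclideanLin (w : Matrix (Fin n) (Fin n) ℝ))
    rw [Matrix.toEuclideanLin_eq_toLin, LinearMap.det_toLin]
  · intro g hg
    apply φ.injective
    rw [map_mul, map_mul, φ.apply_symm_apply]
    have hKg : K.map ((φ g).toLinearEquiv : _ →ₗ[ℝ] EuclideanSpace ℝ (Fin n)) = K := by
      change (V.map _).map _ = V.map _
      conv_rhs => rw [← hg]
      rw [← Submodule.map_comp, ← Submodule.map_comp]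
      rfl
    ext1 x
    have h := Submodule.reflection_map_apply (φ g) K (φ g x)
    simp only [hKg] at h
    rw [LinearIsometryEquiv.symm_apply_apply] at h
    rw [LinearIsometryEquiv.coe_mul, LinearIsometryEquiv.coe_mul, Function.comp, Function.comp,
      Submodule.reflection_orthogonal_apply, Submodule.reflection_orthogonal_apply, h, map_neg]

theorem stmt_13 (n : ℕ) (hn : 0 < n) (G : Subgroup (Matrix.orthogonalGroup (Fin n) ℝ))
    [Finite G] :
    (∃ w : Matrix.orthogonalGroup (Fin n) ℝ, (w : Matrix (Fin n) (Fin n) ℝ).det = -1 ∧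
        ∀ g ∈ G, w * g = g * w) ↔
      (∃ V : Submodule ℝ (Fin n → ℝ), Odd (Module.finrank ℝ V) ∧
        ∀ g ∈ G, V.map (Matrix.mulVecLin (g : Matrix (Fin n) (Fin n) ℝ)) = V) := by
  constructor
  · rintro ⟨w, hw, hc⟩
    refine ⟨_, aux_odd w.1 w.2 hw, aux_map _ G ?_⟩
    intro g hg v hv
    have hcomm : Commute (Matrix.mulVecLin (-w.1)) (Matrix.mulVecLin g.1) := by
      have := congrArg Subtype.val (hc g hg)
      simp only [Submonoid.coe_mul] at this
      rw [Commute, SemiconjBy, Module.End.mul_eq_comp, Module.End.mul_eq_comp,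
        ← Matrix.mulVecLin_mul, ← Matrix.mulVecLin_mul, neg_mul, mul_neg, this]
    exact Module.End.mapsTo_maxGenEigenspace_of_comm hcomm 1 hv
  · rintro ⟨V, hV, h⟩
    obtain ⟨w, hw, hc⟩ := aux_refl V hV
    exact ⟨w, hw, fun g hg => hc g (h g hg)⟩
end

section
/- Let n be a positive integer and let g be a finite-order element of the orthogonal group O(n) acting on ℝⁿ. Then there exists w ∈ O(n) with determinant −1 commuting with g if and only if g has an invariant 1-dimensional ℝ-subspace of ℝⁿ (equivalently, a real eigenvector). -/
open Polynomial in
lemma aux_pos_s14 (p : ℝ[X]) (hp : p.Monic) (h : ∀ x : ℝ, 0 ≤ x → p.eval x ≠ 0) : 0 < p.eval 0 := by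
  by_contra hneg
  have h0 : p.eval 0 < 0 := lt_of_le_of_ne (not_lt.mp hneg) (h 0 le_rfl)
  have hdeg : 0 < p.degree := by
    by_contra hd
    rw [hp.degree_le_zero_iff_eq_one.mp (not_lt.mp hd)] at h0
    norm_num at h0
  have ht := p.tendsto_atTop_of_leadingCoeff_nonneg hdeg (by rw [hp.leadingCoeff]; norm_num)
  obtain ⟨b, hb1, hb0⟩ := ((ht.eventually_ge_atTop 0).and (Filter.eventually_ge_atTop 0)).exists
  obtain ⟨c, hc, hc0⟩ := intermediate_value_Icc hb0 (p.continuous.continuousOn)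
    (show (0:ℝ) ∈ Set.Icc _ _ from ⟨h0.le, hb1⟩)
  exact h c hc.1 hc0

open Polynomial in
lemma aux_odd_s14 (p : ℝ[X]) (hp : p.Monic) (h : Odd p.natDegree) : ∃ x : ℝ, p.eval x = 0 := by
  by_contra! hne
  have h1 := aux_pos_s14 p hp (fun x _ => hne x)
  have h2 := aux_pos_s14 _ hp.neg_one_pow_natDegree_mul_comp_neg_X (fun x _ => by
    simpa [h.neg_one_pow] using hne (-x))
  simp [h.neg_one_pow] at h2
  linarith

open Matrix in
lemma aux_norm {n : ℕ} (g : Matrix.orthogonalGroup (Fin n) ℝ) (v : Fin n → ℝ) (hv : v ≠ 0) (c : ℝ)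
    (h : (g : Matrix (Fin n) (Fin n) ℝ) *ᵥ v = c • v) : c * c = 1 := by
  have h1 : (g : Matrix (Fin n) (Fin n) ℝ)ᵀ * (g : Matrix (Fin n) (Fin n) ℝ) = 1 :=
    (Matrix.mem_orthogonalGroup_iff' _ _).1 g.2
  have h2 : v ⬝ᵥ v = (c * c) * (v ⬝ᵥ v) := by
    calc v ⬝ᵥ v = v ⬝ᵥ (((g : Matrix (Fin n) (Fin n) ℝ)ᵀ * (g : Matrix (Fin n) (Fin n) ℝ)) *ᵥ v) := by
          rw [h1, one_mulVec]
      _ = (c • v) ⬝ᵥ (c • v) := by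
          rw [← mulVec_mulVec, dotProduct_mulVec, vecMul_transpose, h]
      _ = _ := by simp [mul_assoc]
  have h3 : v ⬝ᵥ v ≠ 0 := fun h => hv (dotProduct_self_eq_zero.mp h)
  have := mul_right_cancel₀ h3 ((one_mul (v ⬝ᵥ v)).trans h2)
  exact this.symm

open Matrix in
lemma aux_back {n : ℕ} (g : Matrix.orthogonalGroup (Fin n) ℝ) (v : Fin n → ℝ) (hv : v ≠ 0) (c : ℝ)
    (h : (g : Matrix (Fin n) (Fin n) ℝ) *ᵥ v = c • v) :
    ∃ w : Matrix.orthogonalGroup (Fin n) ℝ, (w : Matrix (Fin n) (Fin n) ℝ).det = -1 ∧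
        w * g = g * w := by
  have hc := aux_norm g v hv c h
  have h3 : v ⬝ᵥ v ≠ 0 := fun h => hv (dotProduct_self_eq_zero.mp h)
  have h1 : (g : Matrix (Fin n) (Fin n) ℝ)ᵀ * (g : Matrix (Fin n) (Fin n) ℝ) = 1 :=
    (Matrix.mem_orthogonalGroup_iff' _ _).1 g.2
  have hT : v ᵥ* (g : Matrix (Fin n) (Fin n) ℝ) = c • v := by
    have h4 : (g : Matrix (Fin n) (Fin n) ℝ)ᵀ *ᵥ (c • v) = v := by
      rw [← h, mulVec_mulVec, h1, one_mulVec]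
    rw [mulVec_smul, mulVec_transpose] at h4
    calc v ᵥ* (g : Matrix (Fin n) (Fin n) ℝ) = (c * c) • (v ᵥ* (g : Matrix (Fin n) (Fin n) ℝ)) := by
          rw [hc, one_smul]
      _ = _ := by rw [mul_smul, h4]
  set a : ℝ := -2 / (v ⬝ᵥ v) with ha
  have haa : a * (v ⬝ᵥ v) = -2 := by rw [ha]; field_simp
  let W : Matrix (Fin n) (Fin n) ℝ := 1 + vecMulVec (a • v) v
  have hW : W ∈ Matrix.orthogonalGroup (Fin n) ℝ := by
    rw [Matrix.mem_orthogonalGroup_iff]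
    have hs : Wᵀ = W := by
      simp only [W, transpose_add, transpose_one]
      congr 1
      ext i j
      simp only [transpose_apply, vecMulVec_apply, Pi.smul_apply, smul_eq_mul]
      ring
    rw [hs]
    simp only [W, mul_add, add_mul, mul_one, one_mul, vecMulVec_mul_vecMulVec]
    ext i j
    simp [vecMulVec_apply]
    linear_combination (a * v i * v j) * haa
  refine ⟨⟨W, hW⟩, ?_, ?_⟩
  · simp only [W]
    rw [vecMulVec_eq Unit, det_one_add_replicateCol_mul_replicateRow, dotProduct_smul, smul_eq_mul, haa]
    norm_num
  · apply Subtype.ext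
    simp only [Submonoid.coe_mul, MulMemClass.mk_mul_mk, W]
    rw [add_mul, mul_add, vecMulVec_mul, mul_vecMulVec, hT, mulVec_smul, h]
    ext i j
    simp [vecMulVec_apply]
    ring

open Matrix Polynomial in
lemma aux_fwd {n : ℕ} (g w : Matrix.orthogonalGroup (Fin n) ℝ)
    (hd : (w : Matrix (Fin n) (Fin n) ℝ).det = -1) (hc : w * g = g * w) :
    ∃ (v : Fin n → ℝ) (c : ℝ), v ≠ 0 ∧ (g : Matrix (Fin n) (Fin n) ℝ) *ᵥ v = c • v := by
  set M : Matrix (Fin n) (Fin n) ℝ := -(w : Matrix (Fin n) (Fin n) ℝ) with hM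
  have hcM : M * g = g * M := by
    have := congrArg Subtype.val hc
    simp only [Submonoid.coe_mul] at this
    simp [hM, this]
  set f : Module.End ℝ (Fin n → ℝ) := Matrix.toLin' M with hf
  set G : Module.End ℝ (Fin n → ℝ) := Matrix.toLin' (g : Matrix (Fin n) (Fin n) ℝ) with hG
  have hcomm : Commute f G := by
    show f * G = G * f
    rw [hf, hG, Module.End.mul_eq_comp, Module.End.mul_eq_comp, ← Matrix.toLin'_mul,
      ← Matrix.toLin'_mul, hcM]
  have hroots : ∀ x : ℝ, 0 ≤ x → f.charpoly.eval x = 0 → x = 1 := by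
    intro x hx h0
    obtain ⟨v, hv⟩ := ((Module.End.hasEigenvalue_iff_isRoot_charpoly f x).2 h0).exists_hasEigenvector
    have h1 : (w : Matrix (Fin n) (Fin n) ℝ) *ᵥ v = (-x) • v := by
      have := hv.apply_eq_smul
      rw [hf, Matrix.toLin'_apply, hM, neg_mulVec] at this
      rw [neg_smul, ← this, neg_neg]
    have := aux_norm w v hv.2 _ h1
    nlinarith
  have hmon := f.charpoly_monic
  obtain ⟨q, hq, hnd⟩ := f.charpoly.exists_eq_pow_rootMultiplicity_mul_and_not_dvd hmon.ne_zero 1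
  set m := f.charpoly.rootMultiplicity 1 with hm
  have hqm : q.Monic := by
    rw [hq] at hmon
    exact ((monic_X_sub_C (1:ℝ)).pow m).of_mul_monic_left hmon
  have hq0 := aux_pos_s14 q hqm (by
    intro x hx h0
    have := hroots x hx (by rw [hq, eval_mul, h0, mul_zero])
    subst this
    exact hnd (dvd_iff_isRoot.2 h0))
  have hev : f.charpoly.eval 0 = -1 := by
    rw [hf, Matrix.charpoly_toLin', Matrix.eval_charpoly, hM]
    simpa using hd
  have hmodd : Odd m := by
    by_contra hno
    rw [Nat.not_odd_iff_even] at hno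
    rw [hq] at hev
    simp [hno.neg_one_pow] at hev
    linarith
  have hmaps := Module.End.mapsTo_maxGenEigenspace_of_comm hcomm 1
  have hfr := LinearMap.finrank_maxGenEigenspace_eq f 1
  rw [← hm] at hfr
  let R := G.restrict hmaps
  obtain ⟨c, hc0⟩ := aux_odd_s14 R.charpoly R.charpoly_monic (by
    rw [LinearMap.charpoly_natDegree, hfr]; exact hmodd)
  obtain ⟨v, hv⟩ := ((Module.End.hasEigenvalue_iff_isRoot_charpoly R c).2 hc0).exists_hasEigenvector
  refine ⟨v, c, fun h => hv.2 (Subtype.ext h), ?_⟩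
  have := congrArg Subtype.val hv.apply_eq_smul
  simpa [R, hG] using this

/-- For a finite-order element `g` of `O(n)`, there exists `w ∈ O(n)` with `det w = −1`
commuting with `g` if and only if `g` has an invariant 1-dimensional subspace of `ℝⁿ`. -/
theorem stmt_14 (n : ℕ) (hn : 0 < n) (g : Matrix.orthogonalGroup (Fin n) ℝ)
    (hg : IsOfFinOrder g) :
    (∃ w : Matrix.orthogonalGroup (Fin n) ℝ, (w : Matrix (Fin n) (Fin n) ℝ).det = -1 ∧
        w * g = g * w) ↔
      (∃ L : Submodule ℝ (Fin n → ℝ), Module.finrank ℝ L = 1 ∧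
        L.map (Matrix.mulVecLin (g : Matrix (Fin n) (Fin n) ℝ)) = L) := by
  constructor
  · rintro ⟨w, hd, hc⟩
    obtain ⟨v, c, hv, h⟩ := aux_fwd g w hd hc
    have hcc := aux_norm g v hv c h
    refine ⟨Submodule.span ℝ {v}, finrank_span_singleton hv, ?_⟩
    rw [Submodule.map_span, Set.image_singleton, Matrix.mulVecLin_apply, h]
    exact Submodule.span_singleton_smul_eq (IsUnit.of_mul_eq_one c hcc) v
  · rintro ⟨L, h1, hL⟩
    obtain ⟨v, hv, hall⟩ := finrank_eq_one_iff'.1 h1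
    have hmem : Matrix.mulVecLin (g : Matrix (Fin n) (Fin n) ℝ) v ∈ L := by
      have := Submodule.mem_map_of_mem (f := Matrix.mulVecLin (g : Matrix (Fin n) (Fin n) ℝ)) v.2
      rwa [hL] at this
    obtain ⟨c, hc⟩ := hall ⟨_, hmem⟩
    refine aux_back g v (fun h => hv (Subtype.ext h)) c ?_
    have := congrArg Subtype.val hc
    simpa using this.symm
end

section
/- Let a ≥ b be integers with a ≥ 2 and b ≥ 1, and set N = a² + b². Let z = exp(−((a+b)π/N)·i) = cos((a+b)π/N) − sin((a+b)π/N)·i and w = exp(((a−b)π/N)·i) = cos((a−b)π/N) + sin((a−b)π/N)·i, unit quaternions. Then the ℝ-linear isometry [z,w] of ℍ given by x ↦ z̄ x w has no invariant 1-dimensional ℝ-subspace. -/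
open Quaternion

noncomputable section

/-- Let `a ≥ b` be integers with `a ≥ 2`, `b ≥ 1`, and `N = a² + b²`. With
`z = exp(−((a+b)π/N)·i)` and `w = exp(((a−b)π/N)·i)`, the isometry `[z,w] : x ↦ z̄ x w` of
`ℍ` has no invariant 1-dimensional ℝ-subspace. -/
theorem stmt_17 (a b : ℤ) (hba : b ≤ a) (ha : 2 ≤ a) (hb : 1 ≤ b) :
    let N : ℝ := (a : ℝ) ^ 2 + (b : ℝ) ^ 2
    let z : ℍ[ℝ] := ⟨Real.cos (((a : ℝ) + b) * Real.pi / N),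
      -Real.sin (((a : ℝ) + b) * Real.pi / N), 0, 0⟩
    let w : ℍ[ℝ] := ⟨Real.cos (((a : ℝ) - b) * Real.pi / N),
      Real.sin (((a : ℝ) - b) * Real.pi / N), 0, 0⟩
    ¬ ∃ L : Submodule ℝ ℍ[ℝ], Module.finrank ℝ L = 1 ∧ L.map (qrot z w) = L := by
  intro N z w
  rintro ⟨L, hL, hmap⟩
  obtain ⟨⟨v, hvL⟩, hv0, hv⟩ := finrank_eq_one_iff'.mp hL
  have hmem : qrot z w v ∈ L := by
    rw [← hmap]
    exact Submodule.mem_map_of_mem hvL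
  obtain ⟨c, hc⟩ := hv ⟨_, hmem⟩
  have hc' : c • v = star z * v * w := by
    have := congrArg Subtype.val hc
    simpa [qrot] using this
  have haR : (2 : ℝ) ≤ a := by exact_mod_cast ha
  have hbR : (1 : ℝ) ≤ b := by exact_mod_cast hb
  have hbaR : (b : ℝ) ≤ a := by exact_mod_cast hba
  have hN : 2 * (a : ℝ) < N := by
    simp only [N]
    nlinarith
  have hNpos : 0 < N := by linarith
  have key : ∀ x : ℝ, 0 < x → x ≤ a → 0 < Real.sin (2 * x * Real.pi / N) := by
    intro x hx hxa
    apply Real.sin_pos_of_pos_of_lt_pi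
    · have := Real.pi_pos
      positivity
    · rw [div_lt_iff₀ hNpos]
      nlinarith [Real.pi_pos]
  have h1 := key a (by linarith) le_rfl
  have h2 := key b (by linarith) hbaR
  have e1 : 2 * (a : ℝ) * Real.pi / N
      = ((a : ℝ) + b) * Real.pi / N + ((a : ℝ) - b) * Real.pi / N := by ring
  have e2 : 2 * (b : ℝ) * Real.pi / N
      = ((a : ℝ) + b) * Real.pi / N - ((a : ℝ) - b) * Real.pi / N := by ring
  rw [e1, Real.sin_add] at h1
  rw [e2, Real.sin_sub] at h2
  have q0 := congrArg QuaternionAlgebra.re hc'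
  have q1 := congrArg QuaternionAlgebra.imI hc'
  have q2 := congrArg QuaternionAlgebra.imJ hc'
  have q3 := congrArg QuaternionAlgebra.imK hc'
  have z0 : z.re = Real.cos (((a : ℝ) + b) * Real.pi / N) := rfl
  have z1 : z.imI = -Real.sin (((a : ℝ) + b) * Real.pi / N) := rfl
  have z2 : z.imJ = 0 := rfl
  have z3 : z.imK = 0 := rfl
  have w0 : w.re = Real.cos (((a : ℝ) - b) * Real.pi / N) := rfl
  have w1 : w.imI = Real.sin (((a : ℝ) - b) * Real.pi / N) := rfl
  have w2 : w.imJ = 0 := rfl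
  have w3 : w.imK = 0 := rfl
  clear_value z w
  simp only [Quaternion.re_mul, Quaternion.imI_mul, Quaternion.imJ_mul, Quaternion.imK_mul,
    Quaternion.re_star, Quaternion.imI_star, Quaternion.imJ_star, Quaternion.imK_star,
    Quaternion.re_smul, Quaternion.imI_smul, Quaternion.imJ_smul, Quaternion.imK_smul,
    smul_eq_mul, z0, z1, z2, z3, w0, w1, w2, w3] at q0 q1 q2 q3
  generalize Real.cos (((a : ℝ) + b) * Real.pi / N) = ca at *
  generalize Real.sin (((a : ℝ) + b) * Real.pi / N) = sa at *
  generalize Real.cos (((a : ℝ) - b) * Real.pi / N) = cb at *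
  generalize Real.sin (((a : ℝ) - b) * Real.pi / N) = sb at *
  have m1 : (sa * cb + ca * sb) * (v.re ^ 2 + v.imI ^ 2) = 0 := by
    linear_combination v.imI * q0 - v.re * q1
  have m2 : (sa * cb - ca * sb) * (v.imJ ^ 2 + v.imK ^ 2) = 0 := by
    linear_combination v.imK * q2 - v.imJ * q3
  have n1 := (mul_eq_zero.mp m1).resolve_left h1.ne'
  have n2 := (mul_eq_zero.mp m2).resolve_left h2.ne'
  apply hv0
  apply Subtype.ext
  apply Quaternion.ext
  · show v.re = 0
    exact pow_eq_zero_iff (two_ne_zero) |>.mp (by linarith [sq_nonneg v.re, sq_nonneg v.imI])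
  · show v.imI = 0
    exact pow_eq_zero_iff (two_ne_zero) |>.mp (by linarith [sq_nonneg v.re, sq_nonneg v.imI])
  · show v.imJ = 0
    exact pow_eq_zero_iff (two_ne_zero) |>.mp (by linarith [sq_nonneg v.imJ, sq_nonneg v.imK])
  · show v.imK = 0
    exact pow_eq_zero_iff (two_ne_zero) |>.mp (by linarith [sq_nonneg v.imJ, sq_nonneg v.imK])
end
end

section
/- Let ω = (−1 + i + j + k)/2, i_I = (1/2)(i + ((√5−1)/2)·j + ((√5+1)/2)·k), and i'_I = (1/2)(−((√5−1)/2)·i − ((√5+1)/2)·j + k), unit quaternions. Set z = ω·i_I. Then neither of the ℝ-linear isometries of ℍ given by x ↦ z̄ x (−ω·i'_I) and x ↦ z̄ x (ω·i'_I) has an invariant 1-dimensional ℝ-subspace. (Indeed, the real parts of z and of ±ω·i'_I are distinct: Re(z) = −(√5+1)/4 while Re(±ω·i'_I) = ±(√5−1)/4.) -/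
open Quaternion

noncomputable section

/-- `ω = (−1 + i + j + k)/2`. -/
noncomputable def ω : ℍ[ℝ] := ⟨-(1 / 2), 1 / 2, 1 / 2, 1 / 2⟩

/-- `i_I = (1/2)(i + ((√5−1)/2)·j + ((√5+1)/2)·k)`. -/
noncomputable def iI : ℍ[ℝ] := ⟨0, 1 / 2, (Real.sqrt 5 - 1) / 4, (Real.sqrt 5 + 1) / 4⟩

/-- `i'_I = (1/2)(−((√5−1)/2)·i − ((√5+1)/2)·j + k)`. -/
noncomputable def iI' : ℍ[ℝ] := ⟨0, -((Real.sqrt 5 - 1) / 4), -((Real.sqrt 5 + 1) / 4), 1 / 2⟩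

theorem no_inv_aux (z w : ℍ[ℝ]) (hz : normSq z = 1) (hw : normSq w = 1)
    (hne : z.re ^ 2 ≠ w.re ^ 2) :
    ¬ ∃ L : Submodule ℝ ℍ[ℝ], Module.finrank ℝ L = 1 ∧ L.map (qrot z w) = L := by
  rintro ⟨L, hL, hm⟩
  obtain ⟨⟨x, hxL⟩, hx0, hx⟩ := finrank_eq_one_iff'.1 hL
  have hx0' : x ≠ 0 := fun h => hx0 (Subtype.ext h)
  have hmem : qrot z w x ∈ L := by
    have h := Submodule.mem_map_of_mem (f := qrot z w) hxL
    rwa [hm] at h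
  obtain ⟨c, hc⟩ := hx ⟨_, hmem⟩
  have hc' : c • x = star z * x * w := congrArg Subtype.val hc
  have hN : normSq x ≠ 0 := fun h => hx0' (normSq_eq_zero.1 h)
  have hc2 : c ^ 2 = 1 := by
    have h := congrArg normSq hc'
    rw [map_mul, map_mul, normSq_star, hz, hw, normSq_smul, one_mul, mul_one] at h
    exact mul_right_cancel₀ hN (h.trans (one_mul _).symm)
  have h1 : x * w = c • (z * x) := by
    have h := congrArg (fun y => z * y) hc'
    simp only [mul_smul_comm, ← mul_assoc, self_mul_star, hz] at h
    simpa using h.symm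
  have h2 : w.re = c * z.re := by
    have e1 : (x * w * star x).re = normSq x * w.re := by
      simp [normSq_def']; ring
    have e2 : (x * w * star x).re = normSq x * (c * z.re) := by
      rw [h1, smul_mul_assoc, mul_assoc, self_mul_star]
      simp; ring
    exact mul_left_cancel₀ hN (e1.symm.trans e2)
  apply hne
  rw [h2, mul_pow, hc2, one_mul]

/-- With `z = ω·i_I`, neither of the maps `x ↦ z̄ x (−ω·i'_I)` and `x ↦ z̄ x (ω·i'_I)` has an
invariant 1-dimensional ℝ-subspace; indeed `Re(z) = −(√5+1)/4` while
`Re(±ω·i'_I) = ±(√5−1)/4`. -/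
theorem stmt_18 :
    (¬ ∃ L : Submodule ℝ ℍ[ℝ], Module.finrank ℝ L = 1 ∧
        L.map (qrot (ω * iI) (-(ω * iI'))) = L) ∧
    (¬ ∃ L : Submodule ℝ ℍ[ℝ], Module.finrank ℝ L = 1 ∧
        L.map (qrot (ω * iI) (ω * iI')) = L) ∧
    (ω * iI).re = -((Real.sqrt 5 + 1) / 4) ∧
    (ω * iI').re = (Real.sqrt 5 - 1) / 4 ∧
    (-(ω * iI')).re = -((Real.sqrt 5 - 1) / 4) := by
  have h5 : Real.sqrt 5 ^ 2 = 5 := Real.sq_sqrt (by norm_num)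
  have hpos : 0 < Real.sqrt 5 := Real.sqrt_pos.2 (by norm_num)
  have hω : normSq ω = 1 := by
    rw [normSq_def']; simp only [ω]; norm_num
  have hi : normSq iI = 1 := by
    rw [normSq_def']; simp only [iI]; linarith
  have hi' : normSq iI' = 1 := by
    rw [normSq_def']; simp only [iI']; linarith
  have r1 : (ω * iI).re = -((Real.sqrt 5 + 1) / 4) := by
    rw [re_mul]; simp only [ω, iI]; ring
  have r2 : (ω * iI').re = (Real.sqrt 5 - 1) / 4 := by
    rw [re_mul]; simp only [ω, iI']; ring
  have r3 : (-(ω * iI')).re = -((Real.sqrt 5 - 1) / 4) := by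
    rw [re_neg, r2]
  have n1 : normSq (ω * iI) = 1 := by rw [map_mul, hω, hi, one_mul]
  have n2 : normSq (ω * iI') = 1 := by rw [map_mul, hω, hi', one_mul]
  refine ⟨no_inv_aux _ _ n1 (by rw [normSq_neg, n2]) ?_, no_inv_aux _ _ n1 n2 ?_, r1, r2, r3⟩
  · rw [r1, r3]; intro h; linarith
  · rw [r1, r2]; intro h; linarith
end
end
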